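/- Let q be a prime power and n a positive integer, and let σ and τ be compositions of n. Suppose Y is a subset of GL(n,q) that is transitive on σ-flags. If σ̃ ⊴ τ̃, where σ̃ and τ̃ are the partitions obtained from σ and τ by rearranging their parts in nonincreasing order, then Y is also transitive on τ-flags. -/

import Mathlib

open Module

/-- The linear automorphism of `F_q^n` induced by `g ∈ GL(n,q)`. -/
def glMap (F : Type) [Field F] {n : ℕ} (g : GL (Fin n) F) : (Fin n → F) →ₗ[F] (Fin n → F) :=
  Matrix.mulVecLin (g : Matrix (Fin n) (Fin n) F)

/-- A `ρ`-flag for a composition `ρ = (ρ_1,…,ρ_k)` of `n`: a chain of subspaces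
`{0} = V_0 ≤ V_1 ≤ ⋯ ≤ V_k = F_q^n` with `dim(V_i/V_{i−1}) = ρ_i` for each `i`. -/
structure RhoFlag (F : Type) [Field F] (n : ℕ) (ρ : Composition n) where
  V : Fin (ρ.length + 1) → Submodule F (Fin n → F)
  mono : Monotone V
  bot_eq : V 0 = ⊥
  top_eq : V (Fin.last ρ.length) = ⊤
  dim : ∀ i : Fin ρ.length,
    finrank F (V i.succ) = finrank F (V i.castSucc) + ρ.blocksFun i

/-- `g ∈ GL(n,q)` maps the `ρ`-flag `A` to the `ρ`-flag `B`. -/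
def MapsFlag (F : Type) [Field F] {n : ℕ} {ρ : Composition n} (g : GL (Fin n) F)
    (A B : RhoFlag F n ρ) : Prop :=
  ∀ j, Submodule.map (glMap F g) (A.V j) = B.V j

/-- A subset `Y` of `GL(n,q)` is transitive on `ρ`-flags: there is a constant `r` such that
for all `ρ`-flags `A`, `B` there are exactly `r` elements `g ∈ Y` mapping `A` to `B`. -/
def TransitiveOnFlags (F : Type) [Field F] [Fintype F] {n : ℕ} (Y : Set (GL (Fin n) F))
    (ρ : Composition n) : Prop :=
  ∃ r : ℕ, ∀ A B : RhoFlag F n ρ,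
    Nat.card {g : GL (Fin n) F // g ∈ Y ∧ MapsFlag F g A B} = r

/-- The sum of the `k` largest entries of a multiset of natural numbers (all of them if the
multiset has fewer than `k` entries). For a partition regarded as a multiset of parts, this is
the `k`-th partial sum `λ_1 + ⋯ + λ_k` of the parts arranged in nonincreasing order. -/
def kLargestSum (μ : Multiset ℕ) (k : ℕ) : ℕ :=
  ((μ.powerset.filter (fun s => Multiset.card s ≤ k)).map Multiset.sum).sup

/-- Dominance order on partitions (as multisets of parts): `μ ⊴ λ` iff for every `k` the sum
of the `k` largest parts of `μ` is at most the sum of the `k` largest parts of `λ`. -/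
def Dominates (μ lam : Multiset ℕ) : Prop :=
  ∀ k : ℕ, kLargestSum μ k ≤ kLargestSum lam k

section Subspaces

variable {F : Type*} [Field F] {V W : Type*} [AddCommGroup V] [Module F V]
  [AddCommGroup W] [Module F W]

/-- Glue linear equivalences of complementary subspaces. -/
theorem exists_linearEquiv_glue {U C : Submodule F V} {U' C' : Submodule F W}
    (h : IsCompl U C) (h' : IsCompl U' C') (e₁ : U ≃ₗ[F] U') (e₂ : C ≃ₗ[F] C') :
    ∃ e : V ≃ₗ[F] W, (∀ u : U, e u = e₁ u) ∧ ∀ c : C, e c = e₂ c := by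
  refine ⟨(U.prodEquivOfIsCompl C h).symm ≪≫ₗ (e₁.prodCongr e₂) ≪≫ₗ
    U'.prodEquivOfIsCompl C' h', fun u => ?_, fun c => ?_⟩
  · simp
  · simp

variable [FiniteDimensional F W]

theorem map_linearEquiv_eq_of_le {e : V ≃ₗ[F] W} {U : Submodule F V} {U' : Submodule F W}
    (hle : ∀ u ∈ U, e u ∈ U') (hU : finrank F U = finrank F U') :
    U.map (e : V →ₗ[F] W) = U' := by
  apply Submodule.eq_of_le_of_finrank_eq
  · rintro _ ⟨u, hu, rfl⟩
    exact hle u hu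
  · rw [LinearEquiv.finrank_map_eq, hU]

variable [FiniteDimensional F V]

theorem exists_submodule_between {X D : Submodule F V} (h : X ≤ D) {z : ℕ}
    (hX : finrank F X ≤ z) (hD : z ≤ finrank F D) :
    ∃ Z : Submodule F V, X ≤ Z ∧ Z ≤ D ∧ finrank F Z = z := by
  induction z, hX using Nat.le_induction with
  | base => exact ⟨X, le_rfl, h, rfl⟩
  | succ z hz ih =>
    obtain ⟨Z, hXZ, hZD, rfl⟩ := ih (by omega)
    have hlt : Z < D := lt_of_le_of_ne hZD (by rintro rfl; omega)
    obtain ⟨v, hvD, hvZ⟩ := SetLike.exists_of_lt hlt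
    have hv : Submodule.span F {v} ≤ D := by simpa using hvD
    refine ⟨Z ⊔ Submodule.span F {v}, hXZ.trans le_sup_left, sup_le hZD hv, ?_⟩
    have h1 := Submodule.finrank_sup_add_finrank_inf_eq Z (Submodule.span F {v})
    have h2 : finrank F (Submodule.span F {v}) ≤ 1 := by
      simpa using finrank_span_le_card (R := F) ({v} : Set V)
    have h3 : Z < Z ⊔ Submodule.span F {v} := by
      refine lt_of_le_of_ne le_sup_left fun he => hvZ ?_
      rw [he]
      exact (le_sup_right : _ ≤ Z ⊔ _) (Submodule.mem_span_singleton_self v)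
    have h4 := Submodule.finrank_lt_finrank_of_lt h3
    omega

theorem exists_linearEquiv_map_eq (U : Submodule F V) (U' : Submodule F W)
    (hV : finrank F V = finrank F W) (hU : finrank F U = finrank F U') :
    ∃ e : V ≃ₗ[F] W, U.map (e : V →ₗ[F] W) = U' := by
  obtain ⟨C, hC⟩ := U.exists_isCompl
  obtain ⟨C', hC'⟩ := U'.exists_isCompl
  have h1 := Submodule.finrank_add_eq_of_isCompl hC
  have h2 := Submodule.finrank_add_eq_of_isCompl hC'
  obtain ⟨e, he, -⟩ := exists_linearEquiv_glue hC hC' (LinearEquiv.ofFinrankEq _ _ hU)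
    (LinearEquiv.ofFinrankEq _ _ (by omega))
  refine ⟨e, map_linearEquiv_eq_of_le (fun u hu => ?_) hU⟩
  rw [he ⟨u, hu⟩]
  exact Subtype.prop _

theorem exists_linearEquiv_of_le {P U : Submodule F V} {P' U' : Submodule F W} (hP : U ≤ P)
    (hP' : U' ≤ P') (hPP : finrank F P = finrank F P') (hU : finrank F U = finrank F U') :
    ∃ e : P ≃ₗ[F] P', ∀ u : P, (u : V) ∈ U → (e u : W) ∈ U' := by
  obtain ⟨e, he⟩ := exists_linearEquiv_map_eq (U.comap P.subtype) (U'.comap P'.subtype) hPP (by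
    rw [(Submodule.comapSubtypeEquivOfLe hP).finrank_eq,
      (Submodule.comapSubtypeEquivOfLe hP').finrank_eq, hU])
  refine ⟨e, fun u hu => ?_⟩
  have : e u ∈ U'.comap P'.subtype := he ▸ Submodule.mem_map_of_mem (f := (e : P →ₗ[F] P')) hu
  exact this

/-- Two subspaces of equal dimension meeting `X₀` in equal dimension are conjugate under the
stabilizer of `X₀`. -/
theorem exists_linearEquiv_stabilizing {X₀ X X' : Submodule F V}
    (hX : finrank F X = finrank F X')
    (hi : finrank F (X ⊓ X₀ : Submodule F V) = finrank F (X' ⊓ X₀ : Submodule F V)) :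
    ∃ e : V ≃ₗ[F] V, X₀.map (e : V →ₗ[F] V) = X₀ ∧ X.map (e : V →ₗ[F] V) = X' := by
  have key : ∀ X : Submodule F V, ∃ C D : Submodule F V, C ≤ D ∧ IsCompl X₀ D ∧
      (X ⊓ X₀) ⊔ C = X ∧
      finrank F C + finrank F (X ⊓ X₀ : Submodule F V) = finrank F X := by
    intro X
    obtain ⟨C, hd, hs⟩ := IsModularLattice.exists_disjoint_and_sup_eq (inf_le_left : X ⊓ X₀ ≤ X)
    have hCX : C ≤ X := hs ▸ le_sup_right
    have hdis : Disjoint C X₀ := by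
      rw [disjoint_iff_inf_le] at hd ⊢
      exact le_trans (le_inf (le_inf (inf_le_left.trans hCX) inf_le_right) inf_le_left) hd
    obtain ⟨D, hCD, hD⟩ := hdis.exists_isCompl
    refine ⟨C, D, hCD, hD.symm, hs, ?_⟩
    have h1 := Submodule.finrank_sup_add_finrank_inf_eq (X ⊓ X₀) C
    rw [hs, disjoint_iff.1 hd, finrank_bot] at h1
    omega
  obtain ⟨C, D, hCD, hD, hs, hf⟩ := key X
  obtain ⟨C', D', hCD', hD', hs', hf'⟩ := key X'
  have h1 := Submodule.finrank_add_eq_of_isCompl hD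
  have h2 := Submodule.finrank_add_eq_of_isCompl hD'
  obtain ⟨e₁, he₁⟩ := exists_linearEquiv_of_le (inf_le_right : X ⊓ X₀ ≤ X₀)
    (inf_le_right : X' ⊓ X₀ ≤ X₀) rfl hi
  obtain ⟨e₂, he₂⟩ := exists_linearEquiv_of_le hCD hCD' (by omega) (by omega)
  obtain ⟨e, heu, hec⟩ := exists_linearEquiv_glue hD hD' e₁ e₂
  refine ⟨e, map_linearEquiv_eq_of_le (fun u hu => ?_) rfl,
    map_linearEquiv_eq_of_le (fun u hu => ?_) hX⟩
  · rw [heu ⟨u, hu⟩]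
    exact Subtype.prop _
  · rw [← hs] at hu
    obtain ⟨t, ht, c, hc, rfl⟩ := Submodule.mem_sup.1 hu
    rw [map_add, heu ⟨t, ht.2⟩, hec ⟨c, hCD hc⟩]
    exact X'.add_mem (he₁ _ ht).1 ((hs' ▸ le_sup_right : C' ≤ X') (he₂ _ hc))

/-- The interval `[A, B]` is isomorphic to the subspace lattice of a space of dimension
`dim B - dim A`. -/
theorem exists_orderIso_Icc {A B : Submodule F V} (hAB : A ≤ B)
    (hW : finrank F B = finrank F A + finrank F W) :
    ∃ Ψ : Submodule F W ≃o Set.Icc A B,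
      ∀ X, finrank F (Ψ X : Submodule F V) = finrank F A + finrank F X := by
  obtain ⟨C, hd, hs⟩ := IsModularLattice.exists_disjoint_and_sup_eq hAB
  have h1 := Submodule.finrank_sup_add_finrank_inf_eq A C
  rw [hs, disjoint_iff.1 hd, finrank_bot] at h1
  let ε : W ≃ₗ[F] C := LinearEquiv.ofFinrankEq _ _ (by omega)
  let ι : W →ₗ[F] V := C.subtype ∘ₗ (ε : W →ₗ[F] C)
  have hι : Function.Injective ι := C.injective_subtype.comp ε.injective
  have hιC : ∀ w, ι w ∈ C := fun w => (ε w).2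
  have hr : LinearMap.range ι = C := by
    rw [LinearMap.range_comp_of_range_eq_top _ (LinearEquiv.range ε), Submodule.range_subtype]
  have hle : ∀ X : Submodule F W, X.map ι ≤ C := fun X => hr ▸ LinearMap.map_le_range
  have left : ∀ X : Submodule F W, (A ⊔ X.map ι).comap ι = X := by
    intro X
    apply le_antisymm
    · intro w hw
      obtain ⟨a, ha, _, ⟨x, hx, rfl⟩, hax⟩ := Submodule.mem_sup.1 (Submodule.mem_comap.1 hw)
      have h0 : a = ι (w - x) := by rw [map_sub, ← hax]; abel
      have h2 : ι (w - x) = 0 := by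
        have := (Submodule.disjoint_def.1 hd) a ha (h0 ▸ hιC _)
        rw [← h0, this]
      have h3 : w - x = 0 := hι (by rw [h2, map_zero])
      rw [sub_eq_zero.1 h3]
      exact hx
    · exact Submodule.map_le_iff_le_comap.1 le_sup_right
  have right : ∀ Z : Submodule F V, A ≤ Z → Z ≤ B → A ⊔ (Z.comap ι).map ι = Z := by
    intro Z hA hB
    rw [Submodule.map_comap_eq, hr, ← sup_inf_assoc_of_le C hA, hs, inf_eq_right.2 hB]
  refine ⟨{ toFun := fun X => ⟨A ⊔ X.map ι, le_sup_left,
              sup_le hAB ((hle X).trans (hs ▸ le_sup_right))⟩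
            invFun := fun Z => (Z : Submodule F V).comap ι
            left_inv := left
            right_inv := fun Z => Subtype.ext (right Z Z.2.1 Z.2.2)
            map_rel_iff' := ?_ }, fun X => ?_⟩
  · intro X X'
    constructor
    · intro h
      rw [← left X, ← left X']
      exact Submodule.comap_mono h
    · intro h
      exact sup_le_sup_left (Submodule.map_mono h) A
  · have h2 := Submodule.finrank_sup_add_finrank_inf_eq A (X.map ι)
    rw [disjoint_iff.1 (hd.mono_right (hle X)), finrank_bot,
      ← (Submodule.equivMapOfInjective ι hι X).finrank_eq] at h2
    simpa using h2

end Subspaces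

section Inclusion

variable {F : Type*} [Field F] {W : Type*} [AddCommGroup W] [Module F W]

open scoped Classical in
/-- The `x`-dimensional subspaces comparable with `Z`. -/
noncomputable def comparable [Fintype (Submodule F W)] (x : ℕ) (Z : Submodule F W) :
    Finset (Submodule F W) := {X | finrank F X = x ∧ (X ≤ Z ∨ Z ≤ X)}

theorem mem_comparable [Fintype (Submodule F W)] {x : ℕ} {Z X : Submodule F W} :
    X ∈ comparable x Z ↔ finrank F X = x ∧ (X ≤ Z ∨ Z ≤ X) := by
  simp [comparable]

theorem map_mem_comparable_iff {W' : Type*} [AddCommGroup W'] [Module F W']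
    [Fintype (Submodule F W)] [Fintype (Submodule F W')] (e : W ≃ₗ[F] W') {x : ℕ}
    {Z X : Submodule F W} :
    X.map (e : W →ₗ[F] W') ∈ comparable x (Z.map (e : W →ₗ[F] W')) ↔ X ∈ comparable x Z := by
  have h : ∀ A B : Submodule F W,
      A.map (e : W →ₗ[F] W') ≤ B.map (e : W →ₗ[F] W') ↔ A ≤ B := fun A B =>
    (Submodule.orderIsoMapComap e).le_iff_le
  simp only [mem_comparable, h, LinearEquiv.finrank_map_eq]

open scoped Classical in
/-- If a function on the `x`-dimensional subspaces of an `m`-dimensional space sums to zero over the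
subspaces comparable with any given `z`-dimensional subspace, where `z` lies between `x` and
`m - x`, then it vanishes. -/
theorem eq_zero_of_sum_comparable_eq_zero [Finite F] [FiniteDimensional F W]
    [Fintype (Submodule F W)] {x z : ℕ}
    (h : (x ≤ z ∧ z + x ≤ finrank F W) ∨ (finrank F W ≤ z + x ∧ z ≤ x))
    (f : Submodule F W → ℚ)
    (hf : ∀ Z : Submodule F W, finrank F Z = z →
      ∑ X ∈ comparable x Z, f X = 0)
    (X₀ : Submodule F W) (hX₀ : finrank F X₀ = x) : f X₀ = 0 := by
  have : Finite W := Module.finite_of_finite F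
  have : Finite (W ≃ₗ[F] W) := Finite.of_injective (fun e => (e : W → W)) DFunLike.coe_injective
  have := Fintype.ofFinite (W ≃ₗ[F] W)
  let S : Finset (W ≃ₗ[F] W) := {e | X₀.map (e : W →ₗ[F] W) = X₀}
  let φ : Submodule F W → ℚ := fun X => ∑ e ∈ S, f (X.map (e : W →ₗ[F] W))
  have hφsum : ∀ Z : Submodule F W, finrank F Z = z →
      ∑ X ∈ comparable x Z, φ X = 0 := by
    intro Z hZ
    rw [Finset.sum_comm]
    refine Finset.sum_eq_zero fun e _ => ?_
    rw [← hf (Z.map (e : W →ₗ[F] W)) (by rw [LinearEquiv.finrank_map_eq, hZ])]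
    exact Finset.sum_equiv (Submodule.orderIsoMapComap e).toEquiv
      (fun X => (map_mem_comparable_iff e).symm) (fun X _ => rfl)
  have hφinv : ∀ X X' : Submodule F W, finrank F X = finrank F X' →
      finrank F (X ⊓ X₀ : Submodule F W) = finrank F (X' ⊓ X₀ : Submodule F W) → φ X = φ X' := by
    intro X X' hX hi
    obtain ⟨a, ha₀, ha⟩ := exists_linearEquiv_stabilizing hX hi
    refine Finset.sum_equiv ((Equiv.mulRight a⁻¹) : (W ≃ₗ[F] W) ≃ (W ≃ₗ[F] W))
      (fun e => ?_) (fun e _ => ?_)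
    · have h3 : X₀.map ((e * a⁻¹ : W ≃ₗ[F] W) : W →ₗ[F] W) = X₀.map (e : W →ₗ[F] W) := by
        conv_lhs => rw [← ha₀]
        rw [← Submodule.map_comp]
        congr 1
        ext w
        simp
      simp only [S, Finset.mem_filter, Finset.mem_univ, true_and, Equiv.coe_mulRight, h3]
    · rw [← ha, ← Submodule.map_comp]
      congr 2
      ext w
      simp
  have main : ∀ i : ℕ, ∀ X : Submodule F W, finrank F X = x →
      finrank F (X ⊓ X₀ : Submodule F W) = i → φ X = 0 := by
    intro i
    induction i using Nat.strong_induction_on with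
    | _ i ih =>
    intro X hX hXi
    obtain ⟨Z, hZ, hXZ, hle⟩ : ∃ Z : Submodule F W, finrank F Z = z ∧ (X ≤ Z ∨ Z ≤ X) ∧
        ∀ X' : Submodule F W, finrank F X' = x → (X' ≤ Z ∨ Z ≤ X') →
          finrank F (X' ⊓ X₀ : Submodule F W) ≤ i := by
      have hsup := Submodule.finrank_sup_add_finrank_inf_eq X X₀
      rcases h with ⟨h1, h2⟩ | ⟨h1, h2⟩
      · obtain ⟨C, hd, hs⟩ := IsModularLattice.exists_disjoint_and_sup_eq
          (inf_le_right : X ⊓ X₀ ≤ X₀)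
        have hCX₀ : C ≤ X₀ := hs ▸ le_sup_right
        have hdis : Disjoint X C := by
          rw [disjoint_iff_inf_le] at hd ⊢
          exact le_trans (le_inf (le_inf inf_le_left (inf_le_right.trans hCX₀)) inf_le_right) hd
        obtain ⟨D, hXD, hD⟩ := hdis.exists_isCompl
        have h3 := Submodule.finrank_add_eq_of_isCompl hD
        have h4 := Submodule.finrank_mono hCX₀
        obtain ⟨Z, hXZ, hZD, hZ⟩ := exists_submodule_between hXD (z := z) (by omega) (by omega)
        have hDX₀ : D ⊓ X₀ ≤ X ⊓ X₀ := by
          have h5 := sup_inf_assoc_of_le C (inf_le_left.trans hXD : X ⊓ X₀ ≤ D)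
          rw [hs, inf_comm C, disjoint_iff.1 hD.disjoint, sup_bot_eq] at h5
          rw [inf_comm, h5]
        refine ⟨Z, hZ, Or.inl hXZ, fun X' hX' hc => ?_⟩
        have hX'Z : X' ≤ Z := by
          rcases hc with hc | hc
          · exact hc
          · exact (Submodule.eq_of_le_of_finrank_le hc (by omega)).ge
        rw [← hXi]
        exact Submodule.finrank_mono ((inf_le_inf_right X₀ (hX'Z.trans hZD)).trans hDX₀)
      · obtain ⟨C, hd, hs⟩ := IsModularLattice.exists_disjoint_and_sup_eq
          (inf_le_left : X ⊓ X₀ ≤ X)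
        have hCX : C ≤ X := hs ▸ le_sup_right
        have h3 := Submodule.finrank_sup_add_finrank_inf_eq (X ⊓ X₀) C
        rw [hs, disjoint_iff.1 hd, finrank_bot] at h3
        have h4 := Submodule.finrank_le (X ⊔ X₀)
        obtain ⟨Z, hCZ, hZX, hZ⟩ := exists_submodule_between hCX (z := z) (by omega) (by omega)
        refine ⟨Z, hZ, Or.inr hZX, fun X' hX' hc => ?_⟩
        have hZX' : Z ≤ X' := by
          rcases hc with hc | hc
          · exact (Submodule.eq_of_le_of_finrank_le hc (by omega)).ge
          · exact hc
        have h5 := Submodule.finrank_sup_add_finrank_inf_eq X' X₀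
        have h6 : X ⊔ X₀ ≤ X' ⊔ X₀ := by
          refine sup_le ?_ le_sup_right
          rw [← hs]
          exact sup_le (inf_le_right.trans le_sup_right) ((hCZ.trans hZX').trans le_sup_left)
        have h7 := Submodule.finrank_mono h6
        omega
    have h1 := hφsum Z hZ
    have h2 : ∑ X' ∈ comparable x Z, φ X' =
        ∑ X' ∈ comparable x Z with
          finrank F (X' ⊓ X₀ : Submodule F W) = i, φ X := by
      rw [Finset.sum_filter]
      refine Finset.sum_congr rfl fun X' hX' => ?_
      rw [mem_comparable] at hX'
      split_ifs with hi
      · exact hφinv _ _ (by rw [hX'.1, hX]) (by rw [hi, hXi])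
      · exact ih _ (lt_of_le_of_ne (hle X' hX'.1 hX'.2) hi) X' hX'.1 rfl
    rw [h2, Finset.sum_const, nsmul_eq_mul] at h1
    rcases mul_eq_zero.1 h1 with h3 | h3
    · exfalso
      rw [Nat.cast_eq_zero, Finset.card_eq_zero, Finset.filter_eq_empty_iff] at h3
      exact h3 (mem_comparable.2 ⟨hX, hXZ⟩) hXi
    · exact h3
  have h1 := main _ X₀ hX₀ rfl
  have h2 : φ X₀ = ∑ e ∈ S, f X₀ := by
    refine Finset.sum_congr rfl fun e he => ?_
    rw [(Finset.mem_filter.1 he).2]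
  rw [h2, Finset.sum_const, nsmul_eq_mul] at h1
  rcases mul_eq_zero.1 h1 with h3 | h3
  · exfalso
    rw [Nat.cast_eq_zero, Finset.card_eq_zero, Finset.filter_eq_empty_iff] at h3
    exact h3 (Finset.mem_univ (1 : W ≃ₗ[F] W)) (Submodule.map_id X₀)
  · exact h3

end Inclusion

section Local

variable {F : Type*} [Field F] {W : Type*} [AddCommGroup W] [Module F W] [FiniteDimensional F W]

theorem card_comparable_eq [Fintype (Submodule F W)] (x : ℕ) {Z Z' : Submodule F W}
    (h : finrank F Z = finrank F Z') : (comparable x Z).card = (comparable x Z').card := by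
  obtain ⟨e, rfl⟩ := exists_linearEquiv_map_eq Z Z' rfl h
  exact Finset.card_equiv (Submodule.orderIsoMapComap e).toEquiv
    (fun X => (map_mem_comparable_iff e).symm)

/-- The number of members of a family of lattice automorphisms mapping `X` to `X'` is the same for
all `x`-dimensional `X` and `X'`, provided this holds in dimension `z` and `z` lies between `x` and
its codimension. The number is determined by its counterpart in dimension `z`. -/
theorem exists_card_map_eq [Finite F] {x z : ℕ} (hx : x ≤ finrank F W)
    (h : (x ≤ z ∧ z + x ≤ finrank F W) ∨ (finrank F W ≤ z + x ∧ z ≤ x)) (r : ℕ) :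
    ∃ κ : ℚ, ∀ (I : Type) [Finite I] (φ : I → Submodule F W ≃o Submodule F W),
      (∀ i X, finrank F (φ i X) = finrank F X) →
      (∀ Z Z' : Submodule F W, finrank F Z = z → finrank F Z' = z →
        Nat.card {i // φ i Z = Z'} = r) →
      ∀ X X' : Submodule F W, finrank F X = x → finrank F X' = x →
        (Nat.card {i // φ i X = X'} : ℚ) = κ := by
  classical
  have : Finite W := Module.finite_of_finite F
  have : Finite (Submodule F W) := Finite.of_injective (fun X => (X : Set W)) SetLike.coe_injective
  have := Fintype.ofFinite (Submodule F W)
  have hz : z ≤ finrank F W := by omega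
  obtain ⟨X₁, -, -, hX₁⟩ := exists_submodule_between (bot_le : (⊥ : Submodule F W) ≤ ⊤) (z := x)
    (by simp) (by simpa using hx)
  obtain ⟨Z₁, -, -, hZ₁⟩ := exists_submodule_between (bot_le : (⊥ : Submodule F W) ≤ ⊤) (z := z)
    (by simp) (by simpa using hz)
  have hpos : 0 < (comparable x Z₁).card := by
    rw [Finset.card_pos]
    rcases le_total x z with hxz | hxz
    · obtain ⟨X, -, hX, hX'⟩ := exists_submodule_between (bot_le : ⊥ ≤ Z₁) (z := x)
        (by simp) (by omega)
      exact ⟨X, mem_comparable.2 ⟨hX', Or.inl hX⟩⟩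
    · obtain ⟨X, hX, -, hX'⟩ := exists_submodule_between (le_top : Z₁ ≤ ⊤) (z := x)
        (by omega) (by simpa using hx)
      exact ⟨X, mem_comparable.2 ⟨hX', Or.inr hX⟩⟩
  refine ⟨r * (comparable z X₁).card / (comparable x Z₁).card, ?_⟩
  intro I _ φ hφ hr X X' hX hX'
  have := Fintype.ofFinite I
  simp only [Nat.card_eq_fintype_card, Fintype.card_subtype] at hr ⊢
  have hpos' : ((comparable x Z₁).card : ℚ) ≠ 0 := by exact_mod_cast hpos.ne'
  rw [← sub_eq_zero]
  refine eq_zero_of_sum_comparable_eq_zero h (fun X' => ((Finset.univ.filter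
    fun i => φ i X = X').card : ℚ) - r * (comparable z X₁).card / (comparable x Z₁).card)
    (fun Z' hZ' => ?_) X' hX'
  rw [Finset.sum_sub_distrib, Finset.sum_const, nsmul_eq_mul,
    card_comparable_eq x (hZ'.trans hZ₁.symm), mul_div_cancel₀ _ hpos', sub_eq_zero]
  have h1 : (Finset.univ.filter fun i => φ i X ∈ comparable x Z').card =
      ∑ X' ∈ comparable x Z', (Finset.univ.filter fun i => φ i X = X').card := by
    rw [Finset.card_eq_sum_card_fiberwise (f := fun i => φ i X) (t := comparable x Z')
      (fun i hi => by simpa using hi)]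
    refine Finset.sum_congr rfl fun X'' hX'' => ?_
    rw [Finset.filter_filter]
    congr 1
    ext i
    simp only [Finset.mem_filter, Finset.mem_univ, true_and, and_iff_right_iff_imp]
    rintro rfl
    exact hX''
  have h2 : (Finset.univ.filter fun i => (φ i).symm Z' ∈ comparable z X).card =
      ∑ Z ∈ comparable z X, (Finset.univ.filter fun i => φ i Z = Z').card := by
    rw [Finset.card_eq_sum_card_fiberwise (f := fun i => (φ i).symm Z') (t := comparable z X)
      (fun i hi => by simpa using hi)]
    refine Finset.sum_congr rfl fun Z hZ => ?_
    rw [Finset.filter_filter]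
    congr 1
    ext i
    simp only [Finset.mem_filter, Finset.mem_univ, true_and, OrderIso.symm_apply_eq]
    constructor
    · rintro ⟨-, h⟩
      exact h.symm
    · rintro rfl
      simpa using hZ
  have h3 : (Finset.univ.filter fun i => φ i X ∈ comparable x Z') =
      Finset.univ.filter fun i => (φ i).symm Z' ∈ comparable z X := by
    ext i
    have h4 : finrank F ((φ i).symm Z') = z := by rw [← hφ i, OrderIso.apply_symm_apply, hZ']
    simp only [Finset.mem_filter, Finset.mem_univ, true_and, mem_comparable, hφ, hX, h4,
      OrderIso.symm_apply_le, OrderIso.le_symm_apply, or_comm]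
  have h5 : ∑ Z ∈ comparable z X, (Finset.univ.filter fun i => φ i Z = Z').card =
      (comparable z X₁).card * r := by
    rw [Finset.sum_congr rfl fun Z hZ => hr Z Z' (mem_comparable.1 hZ).1 hZ', Finset.sum_const,
      smul_eq_mul, card_comparable_eq z (hX.trans hX₁.symm)]
  rw [← Nat.cast_sum, ← h1, h3, h2, h5]
  push_cast
  ring

end Local

/-- The restriction of an order isomorphism to intervals. -/
def OrderIso.restrictIcc {α β : Type*} [Preorder α] [Preorder β] (e : α ≃o β) {a b : α} {a' b' : β}
    (ha : e a = a') (hb : e b = b') : Set.Icc a b ≃o Set.Icc a' b' where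
  toFun z := ⟨e z, ha ▸ e.monotone z.2.1, hb ▸ e.monotone z.2.2⟩
  invFun z := ⟨e.symm z, e.le_symm_apply.2 (ha ▸ z.2.1), e.symm_apply_le.2 (hb ▸ z.2.2)⟩
  left_inv z := Subtype.ext (e.symm_apply_apply _)
  right_inv z := Subtype.ext (e.apply_symm_apply _)
  map_rel_iff' := e.le_iff_le

section Flags

variable {F : Type} [Field F] {n : ℕ}

/-- `glMap` as a linear equivalence. -/
def glEquiv (g : GL (Fin n) F) : (Fin n → F) ≃ₗ[F] (Fin n → F) :=
  LinearEquiv.ofLinearMap (glMap F g) (glMap F g⁻¹)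
    (by rw [glMap, glMap, ← Matrix.mulVecLin_mul, ← Units.val_mul]; simp)
    (by rw [glMap, glMap, ← Matrix.mulVecLin_mul, ← Units.val_mul]; simp)

/-- The order automorphism of the subspace lattice induced by `g ∈ GL(n,q)`. -/
def glOrderIso (g : GL (Fin n) F) : Submodule F (Fin n → F) ≃o Submodule F (Fin n → F) :=
  Submodule.orderIsoMapComap (glEquiv g)

theorem glOrderIso_apply (g : GL (Fin n) F) (X : Submodule F (Fin n → F)) :
    glOrderIso g X = X.map (glMap F g) := rfl

theorem finrank_glOrderIso (g : GL (Fin n) F) (X : Submodule F (Fin n → F)) :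
    finrank F (glOrderIso g X) = finrank F X :=
  LinearEquiv.finrank_map_eq (glEquiv g) X

/-- A chain of subspaces indexed by `ℕ` with prescribed dimensions `d`. -/
def IsFlag (d : ℕ → ℕ) (A : ℕ → Submodule F (Fin n → F)) : Prop :=
  Monotone A ∧ ∀ i, finrank F (A i) = d i

/-- Transitivity of `Y` on the chains of subspaces with dimensions `d`. -/
def TransitiveOnDims (Y : Set (GL (Fin n) F)) (d : ℕ → ℕ) : Prop :=
  ∃ r : ℕ, ∀ A B : ℕ → Submodule F (Fin n → F), IsFlag d A → IsFlag d B →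
    Nat.card {g : GL (Fin n) F // g ∈ Y ∧ ∀ j, (A j).map (glMap F g) = B j} = r

theorem IsFlag.update {d d' : ℕ → ℕ} {k : ℕ} (hd : ∀ j, j ≠ k + 1 → d' j = d j)
    {A : ℕ → Submodule F (Fin n → F)} (hA : IsFlag d' A) {Z : Submodule F (Fin n → F)}
    (h₁ : A k ≤ Z) (h₂ : Z ≤ A (k + 2)) (hZ : finrank F Z = d (k + 1)) :
    IsFlag d (Function.update A (k + 1) Z) := by
  refine ⟨monotone_nat_of_le_succ fun i => ?_, fun i => ?_⟩
  · rcases eq_or_ne i k with rfl | h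
    · simpa using h₁
    · rcases eq_or_ne i (k + 1) with rfl | h'
      · simpa using h₂
      · rw [Function.update_of_ne h', Function.update_of_ne (by omega)]
        exact hA.1 (Nat.le_succ i)
  · rcases eq_or_ne i (k + 1) with rfl | h'
    · rw [Function.update_self]
      exact hZ
    · rw [Function.update_of_ne h', hA.2, hd i h']

/-- Transitivity is inherited when a single dimension `d (k + 1)` is moved away from the middle of
`d k` and `d (k + 2)`, or reflected in it. -/
theorem TransitiveOnDims.step [Finite F] {Y : Set (GL (Fin n) F)} {d d' : ℕ → ℕ}
    (hY : TransitiveOnDims Y d) (k : ℕ) (hd : ∀ j, j ≠ k + 1 → d' j = d j)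
    (h : (d' (k + 1) ≤ d (k + 1) ∧ d (k + 1) + d' (k + 1) ≤ d k + d (k + 2)) ∨
      (d k + d (k + 2) ≤ d (k + 1) + d' (k + 1) ∧ d (k + 1) ≤ d' (k + 1))) :
    TransitiveOnDims Y d' := by
  obtain ⟨r, hr⟩ := hY
  by_cases hex : ∃ A₀ : ℕ → Submodule F (Fin n → F), IsFlag d' A₀
  swap
  · exact ⟨0, fun A B hA _ => (hex ⟨A, hA⟩).elim⟩
  obtain ⟨A₀, hA₀⟩ := hex
  have hk := hd k (by omega)
  have hk2 := hd (k + 2) (by omega)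
  have hlo : d k ≤ d' (k + 1) := by
    rw [← hk, ← hA₀.2, ← hA₀.2]
    exact Submodule.finrank_mono (hA₀.1 (Nat.le_succ _))
  have hhi : d' (k + 1) ≤ d (k + 2) := by
    rw [← hk2, ← hA₀.2, ← hA₀.2]
    exact Submodule.finrank_mono (hA₀.1 (Nat.le_succ _))
  obtain ⟨m, hm⟩ := Nat.exists_eq_add_of_le (hlo.trans hhi)
  obtain ⟨x, hx⟩ := Nat.exists_eq_add_of_le hlo
  obtain ⟨z, hz⟩ := Nat.exists_eq_add_of_le (show d k ≤ d (k + 1) by omega)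
  have hmW : finrank F (Fin m → F) = m := Module.finrank_fin_fun F
  obtain ⟨κ, hκ⟩ := exists_card_map_eq (F := F) (W := Fin m → F) (x := x) (z := z)
    (by omega) (by omega) r
  have key : ∀ A B : ℕ → Submodule F (Fin n → F), IsFlag d' A → IsFlag d' B →
      (Nat.card {g : GL (Fin n) F // g ∈ Y ∧ ∀ j, (A j).map (glMap F g) = B j} : ℚ) = κ := by
    intro A B hA hB
    obtain ⟨ΨA, hΨA⟩ := exists_orderIso_Icc (W := Fin m → F) (hA.1 (show k ≤ k + 2 by omega))
      (by rw [hA.2, hA.2, hk, hk2, hmW, hm])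
    obtain ⟨ΨB, hΨB⟩ := exists_orderIso_Icc (W := Fin m → F) (hB.1 (show k ≤ k + 2 by omega))
      (by rw [hB.2, hB.2, hk, hk2, hmW, hm])
    rw [hA.2, hk] at hΨA
    rw [hB.2, hk] at hΨB
    let I := {g : GL (Fin n) F // g ∈ Y ∧ ∀ j, j ≠ k + 1 → glOrderIso g (A j) = B j}
    let φ : I → Submodule F (Fin m → F) ≃o Submodule F (Fin m → F) := fun g =>
      ΨA.trans (((glOrderIso g.1).restrictIcc (g.2.2 k (by omega))
        (g.2.2 (k + 2) (by omega))).trans ΨB.symm)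
    have hφ : ∀ i X X', φ i X = X' ↔ glOrderIso i.1 (ΨA X) = ΨB X' := by
      intro i X X'
      change ΨB.symm ((glOrderIso i.1).restrictIcc (i.2.2 k (by omega))
        (i.2.2 (k + 2) (by omega)) (ΨA X)) = X' ↔ _
      rw [OrderIso.symm_apply_eq, Subtype.ext_iff]
      rfl
    have hdim : ∀ i X, finrank F (φ i X) = finrank F X := by
      intro i X
      have h1 := (hφ i X _).1 rfl
      have h2 := finrank_glOrderIso i.1 (ΨA X)
      rw [h1, hΨA, hΨB] at h2
      omega
    have hcard : ∀ X X' : Submodule F (Fin m → F), Nat.card {i // φ i X = X'} =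
        Nat.card {g : GL (Fin n) F // g ∈ Y ∧ ∀ j,
          (Function.update A (k + 1) (ΨA X : Submodule F (Fin n → F)) j).map (glMap F g) =
            Function.update B (k + 1) (ΨB X' : Submodule F (Fin n → F)) j} := by
      intro X X'
      refine Nat.card_congr
        { toFun := fun i => ⟨i.1.1, i.1.2.1, fun j => ?_⟩
          invFun := fun g => ⟨⟨g.1, g.2.1, fun j hj => ?_⟩, (hφ _ _ _).2 ?_⟩
          left_inv := fun _ => rfl
          right_inv := fun _ => rfl }
      · rcases eq_or_ne j (k + 1) with rfl | hj
        · simpa [glOrderIso_apply] using (hφ _ _ _).1 i.2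
        · simpa [hj, glOrderIso_apply] using i.1.2.2 j hj
      · simpa [hj, glOrderIso_apply] using g.2.2 j
      · simpa [glOrderIso_apply] using g.2.2 (k + 1)
    have hX := hκ I φ hdim (fun Z Z' hZ hZ' => by
      rw [hcard]
      exact hr _ _ (hA.update hd (ΨA Z).2.1 (ΨA Z).2.2 (by rw [hΨA, hZ, hz]))
        (hB.update hd (ΨB Z').2.1 (ΨB Z').2.2 (by rw [hΨB, hZ', hz])))
      (ΨA.symm ⟨A (k + 1), hA.1 (by omega), hA.1 (by omega)⟩)
      (ΨB.symm ⟨B (k + 1), hB.1 (by omega), hB.1 (by omega)⟩)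
      (by
        have := hΨA (ΨA.symm ⟨A (k + 1), hA.1 (by omega), hA.1 (by omega)⟩)
        rw [OrderIso.apply_symm_apply, hA.2] at this
        omega)
      (by
        have := hΨB (ΨB.symm ⟨B (k + 1), hB.1 (by omega), hB.1 (by omega)⟩)
        rw [OrderIso.apply_symm_apply, hB.2] at this
        omega)
    rw [hcard, OrderIso.apply_symm_apply, OrderIso.apply_symm_apply] at hX
    simpa using hX
  refine ⟨Nat.card {g : GL (Fin n) F // g ∈ Y ∧ ∀ j, (A₀ j).map (glMap F g) = A₀ j},
    fun A B hA hB => ?_⟩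
  exact_mod_cast (key A B hA hB).trans (key A₀ A₀ hA₀ hA₀).symm

theorem RhoFlag.finrank_eq {ρ : Composition n} (A : RhoFlag F n ρ) (i : ℕ)
    (hi : i < ρ.length + 1) : finrank F (A.V ⟨i, hi⟩) = ρ.sizeUpTo i := by
  induction i with
  | zero =>
    change finrank F (A.V 0) = _
    rw [A.bot_eq, finrank_bot, Composition.sizeUpTo_zero]
  | succ i ih =>
    have h := A.dim ⟨i, by omega⟩
    rw [ρ.sizeUpTo_succ' ⟨i, by omega⟩, ← ih (by omega)]
    exact h

/-- The extension of a `ρ`-flag to a chain indexed by `ℕ`. -/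
def RhoFlag.extend {ρ : Composition n} (A : RhoFlag F n ρ) (i : ℕ) : Submodule F (Fin n → F) :=
  A.V ⟨min i ρ.length, by omega⟩

theorem RhoFlag.isFlag_extend {ρ : Composition n} (A : RhoFlag F n ρ) :
    IsFlag ρ.sizeUpTo A.extend := by
  refine ⟨fun i j hij => A.mono (Fin.mk_le_mk.2 (min_le_min_right _ hij)), fun i => ?_⟩
  rw [RhoFlag.extend, A.finrank_eq]
  rcases le_total i ρ.length with h | h
  · rw [min_eq_left h]
  · rw [min_eq_right h, ρ.sizeUpTo_ofLength_le i h, ρ.sizeUpTo_length]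

/-- The restriction of a chain indexed by `ℕ` to a `ρ`-flag. -/
def IsFlag.toRhoFlag {ρ : Composition n} {A : ℕ → Submodule F (Fin n → F)}
    (hA : IsFlag ρ.sizeUpTo A) : RhoFlag F n ρ where
  V i := A i
  mono _ _ hij := hA.1 hij
  bot_eq := by
    rw [← Submodule.finrank_eq_zero, hA.2]
    simp
  top_eq := by
    apply Submodule.eq_top_of_finrank_eq
    rw [hA.2]
    simp
  dim i := by
    rw [hA.2, hA.2]
    exact ρ.sizeUpTo_succ' i

theorem IsFlag.extend_toRhoFlag {ρ : Composition n} {A : ℕ → Submodule F (Fin n → F)}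
    (hA : IsFlag ρ.sizeUpTo A) : hA.toRhoFlag.extend = A := by
  funext i
  change A (min i ρ.length) = A i
  rcases le_total i ρ.length with h | h
  · rw [min_eq_left h]
  · rw [min_eq_right h]
    apply Submodule.eq_of_le_of_finrank_eq (hA.1 h)
    rw [hA.2, hA.2, ρ.sizeUpTo_ofLength_le i h, ρ.sizeUpTo_length]

theorem mapsFlag_iff_extend {ρ : Composition n} (g : GL (Fin n) F) (A B : RhoFlag F n ρ) :
    MapsFlag F g A B ↔ ∀ j, (A.extend j).map (glMap F g) = B.extend j := by
  refine ⟨fun h j => h _, fun h j => ?_⟩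
  have hj : (⟨min j ρ.length, by omega⟩ : Fin (ρ.length + 1)) = j :=
    Fin.ext (min_eq_left (by omega))
  have := h j
  simpa only [RhoFlag.extend, hj] using this

theorem transitiveOnFlags_iff_dims [Fintype F] (Y : Set (GL (Fin n) F)) (ρ : Composition n) :
    TransitiveOnFlags F Y ρ ↔ TransitiveOnDims Y ρ.sizeUpTo := by
  constructor
  · rintro ⟨r, hr⟩
    refine ⟨r, fun A B hA hB => ?_⟩
    have := hr hA.toRhoFlag hB.toRhoFlag
    simpa only [mapsFlag_iff_extend, IsFlag.extend_toRhoFlag] using this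
  · rintro ⟨r, hr⟩
    refine ⟨r, fun A B => ?_⟩
    simpa only [mapsFlag_iff_extend] using hr _ _ A.isFlag_extend B.isFlag_extend

end Flags

section Dominance

variable {F : Type} [Field F] [Finite F] {n : ℕ} {Y : Set (GL (Fin n) F)}

theorem TransitiveOnDims.swap {l₁ l₂ : List ℕ} {a b : ℕ}
    (h : TransitiveOnDims Y fun k => ((l₁ ++ b :: a :: l₂).take k).sum) :
    TransitiveOnDims Y fun k => ((l₁ ++ a :: b :: l₂).take k).sum := by
  refine h.step l₁.length (fun j hj => ?_) ?_
  · rcases le_or_gt j l₁.length with hj' | hj'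
    · simp [List.take_append, Nat.sub_eq_zero_of_le hj']
    · obtain ⟨i, rfl⟩ : ∃ i, j = l₁.length + (i + 2) := ⟨j - l₁.length - 2, by omega⟩
      simp only [List.take_length_add_append, List.take_succ_cons, List.sum_append, List.sum_cons]
      omega
  · simp only [List.take_length_add_append, List.take_succ_cons, List.sum_append, List.sum_cons,
      List.take_zero, List.sum_nil, List.take_left']
    omega

theorem TransitiveOnDims.perm {l l' : List ℕ} (hp : l.Perm l')
    (h : TransitiveOnDims Y fun k => (l.take k).sum) :
    TransitiveOnDims Y fun k => (l'.take k).sum := by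
  suffices H : ∀ p : List ℕ, TransitiveOnDims Y (fun k => ((p ++ l).take k).sum) →
      TransitiveOnDims Y fun k => ((p ++ l').take k).sum from H [] h
  clear h
  induction hp with
  | nil => exact fun _ => id
  | cons a _ ih =>
    intro p hp
    have := ih (p ++ [a])
    simp only [List.append_assoc, List.singleton_append] at this
    exact this hp
  | swap a b l => exact fun p hp => hp.swap
  | trans _ _ ih₁ ih₂ => exact fun p hp => ih₂ p (ih₁ p hp)

/-- Raising a concave dimension sequence by one on an interval `[i, j)` preserves transitivity. -/
theorem TransitiveOnDims.raise {d : ℕ → ℕ} (hd : ∀ k, d k + d (k + 2) ≤ 2 * d (k + 1)) {i : ℕ}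
    (hi : 0 < i) (h : TransitiveOnDims Y d) (j : ℕ) :
    TransitiveOnDims Y fun k => if i ≤ k ∧ k < j then d k + 1 else d k := by
  induction j with
  | zero => simpa using h
  | succ j ih =>
    rcases lt_or_ge j i with hj | hj
    · have : ∀ k, ¬ (i ≤ k ∧ k < j + 1) := by omega
      simpa only [this, if_false] using h
    · obtain ⟨k, rfl⟩ : ∃ k, j = k + 1 := ⟨j - 1, by omega⟩
      have := hd k
      refine ih.step k (fun l hl => ?_) ?_
      · split_ifs <;> omega
      · right
        split_ifs <;> omega

theorem TransitiveOnDims.of_le_of_concave {N : ℕ} {d e : ℕ → ℕ}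
    (hd : ∀ k, d k + d (k + 2) ≤ 2 * d (k + 1)) (he : ∀ k, e k + e (k + 2) ≤ 2 * e (k + 1))
    (hle : ∀ k, d k ≤ e k) (h₀ : d 0 = e 0) (hN : ∀ k, N ≤ k → d k = e k)
    (h : TransitiveOnDims Y d) : TransitiveOnDims Y e := by
  induction hs : ∑ k ∈ Finset.range N, (e k - d k) using Nat.strong_induction_on generalizing d with
  | _ s ih =>
  by_cases hne : ∃ i, d i ≠ e i
  swap
  · push Not at hne
    rwa [← funext hne]
  classical
  let i := Nat.find hne
  have hi : d i ≠ e i := Nat.find_spec hne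
  have hi' : ∀ k, k < i → d k = e k := fun k hk => not_not.1 (Nat.find_min hne hk)
  have hex : ∃ j, i < j ∧ d j = e j := ⟨max N (i + 1), by omega, hN _ (le_max_left _ _)⟩
  let j := Nat.find hex
  obtain ⟨hij, hj⟩ : i < j ∧ d j = e j := Nat.find_spec hex
  have hj' : ∀ k, i ≤ k → k < j → d k < e k := by
    intro k hk hkj
    rcases hk.eq_or_lt with rfl | hk
    · exact lt_of_le_of_ne (hle _) hi
    · exact lt_of_le_of_ne (hle _) fun hc => Nat.find_min hex hkj ⟨hk, hc⟩
  have hi0 : 0 < i := Nat.pos_of_ne_zero fun hc => hi (by rw [hc, h₀])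
  have hiN : i < N := by
    by_contra hc
    exact hi (hN i (by omega))
  clear_value i j
  refine ih (∑ k ∈ Finset.range N, (e k - if i ≤ k ∧ k < j then d k + 1 else d k)) ?_
    (d := fun k => if i ≤ k ∧ k < j then d k + 1 else d k) (fun k => ?_) (fun k => ?_) ?_
    (fun k hk => ?_) (h.raise hd hi0 j) rfl
  · rw [← hs]
    refine Finset.sum_lt_sum (fun k _ => by split_ifs <;> omega)
      ⟨i, Finset.mem_range.2 hiN, ?_⟩
    have := hj' i le_rfl hij
    rw [if_pos ⟨le_rfl, hij⟩]
    omega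
  · have h1 := hd k
    have h2 := he k
    have h3 := hle k
    have h4 := hle (k + 2)
    have h5 := hj' k
    have h6 := hj' (k + 2)
    have h7 := hi' (k + 1)
    have h8 : k + 1 = j → d (k + 1) = e (k + 1) := fun hc => hc ▸ hj
    split_ifs <;> omega
  · have h5 := hj' k
    have := hle k
    split_ifs <;> omega
  · rw [if_neg (by omega), h₀]
  · have h5 := hj' k
    have := hN k hk
    split_ifs <;> omega

theorem List.Pairwise.concave_sum_take {l : List ℕ} (hl : l.Pairwise (· ≥ ·)) (k : ℕ) :
    (l.take k).sum + (l.take (k + 2)).sum ≤ 2 * (l.take (k + 1)).sum := by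
  induction k generalizing l with
  | zero =>
    match l, hl with
    | [], _ => simp
    | [a], _ =>
      simp
      omega
    | a :: b :: l, hl =>
      have : b ≤ a := (List.pairwise_cons.1 hl).1 b (by simp)
      simp
      omega
  | succ k ih =>
    match l, hl with
    | [], _ => simp
    | a :: l, hl =>
      have := ih (List.pairwise_cons.1 hl).2
      simp only [List.take_succ_cons, List.sum_cons]
      omega

theorem List.Sublist.sum_le_sum_take {l s : List ℕ} (hs : s.Sublist l)
    (hl : l.Pairwise (· ≥ ·)) {k : ℕ} (hk : s.length ≤ k) : s.sum ≤ (l.take k).sum := by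
  induction l generalizing s k with
  | nil => simp [List.sublist_nil.1 hs]
  | cons a l ih =>
    match s, k, hk with
    | [], _, _ => simp
    | b :: s, k + 1, hk =>
      obtain ⟨ha, hl'⟩ := List.pairwise_cons.1 hl
      have hb : b ≤ a := by
        rcases List.mem_cons.1 (hs.subset List.mem_cons_self) with rfl | hb
        · exact le_rfl
        · exact ha b hb
      have hs' : s.Sublist l := hs.tail
      have := ih hs' hl' (k := k) (by simpa using hk)
      simp only [List.take_succ_cons, List.sum_cons]
      omega

theorem kLargestSum_coe {l : List ℕ} (hl : l.Pairwise (· ≥ ·)) (k : ℕ) :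
    kLargestSum l k = (l.take k).sum := by
  apply le_antisymm
  · refine Multiset.sup_le.2 fun b hb => ?_
    obtain ⟨s, hs, rfl⟩ := Multiset.mem_map.1 hb
    obtain ⟨hs, hk⟩ := Multiset.mem_filter.1 hs
    induction s using Quotient.inductionOn with
    | _ s =>
    obtain ⟨s', hp, hs'⟩ := Multiset.coe_le.1 (Multiset.mem_powerset.1 hs)
    have : s'.length ≤ k := by simpa [hp.length_eq] using hk
    simpa [hp.sum_eq] using hs'.sum_le_sum_take hl this
  · refine Multiset.le_sup (Multiset.mem_map.2 ⟨↑(l.take k), Multiset.mem_filter.2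
      ⟨Multiset.mem_powerset.2 (Multiset.coe_le.2 (List.take_sublist k l).subperm), ?_⟩, ?_⟩)
    · simp
    · simp

/-- Every list of natural numbers can be rearranged in nonincreasing order. -/
theorem exists_perm_pairwise_ge (l : List ℕ) : ∃ l', l.Perm l' ∧ l'.Pairwise (· ≥ ·) :=
  ⟨(l : Multiset ℕ).sort (· ≥ ·), Multiset.coe_eq_coe.1 (Multiset.sort_eq _ _).symm,
    Multiset.pairwise_sort _ _⟩

theorem TransitiveOnDims.of_dominates {l m : List ℕ} (hsum : l.sum = m.sum)
    (hdom : Dominates l m) (h : TransitiveOnDims Y fun k => (l.take k).sum) :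
    TransitiveOnDims Y fun k => (m.take k).sum := by
  obtain ⟨l', hl, hl'⟩ := exists_perm_pairwise_ge l
  obtain ⟨m', hm, hm'⟩ := exists_perm_pairwise_ge m
  rw [Multiset.coe_eq_coe.2 hl, Multiset.coe_eq_coe.2 hm] at hdom
  refine TransitiveOnDims.perm hm.symm (TransitiveOnDims.of_le_of_concave
    (N := l'.length + m'.length) (fun k => hl'.concave_sum_take k)
    (fun k => hm'.concave_sum_take k) (fun k => ?_) rfl (fun k hk => ?_) (h.perm hl))
  · rw [← kLargestSum_coe hl', ← kLargestSum_coe hm']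
    exact hdom k
  · rw [List.take_of_length_le (by omega), List.take_of_length_le (by omega), ← hl.sum_eq,
      ← hm.sum_eq, hsum]

end Dominance

/-- If `Y ⊆ GL(n,q)` is transitive on `σ`-flags and `σ̃ ⊴ τ̃`, where `σ̃`, `τ̃` are the
partitions obtained from the compositions `σ`, `τ` by rearranging the parts into nonincreasing
order, then `Y` is transitive on `τ`-flags. -/
theorem statement0 (q : ℕ) (hq : IsPrimePow q) (F : Type) [Field F] [Fintype F]
    (hF : Fintype.card F = q) (n : ℕ) (hn : 0 < n) (σ τ : Composition n)
    (Y : Set (GL (Fin n) F)) (hY : TransitiveOnFlags F Y σ)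
    (hdom : Dominates (↑σ.blocks) (↑τ.blocks)) :
    TransitiveOnFlags F Y τ := by
  rw [transitiveOnFlags_iff_dims] at hY ⊢
  exact TransitiveOnDims.of_dominates (l := σ.blocks) (m := τ.blocks)
    (by rw [σ.blocks_sum, τ.blocks_sum]) hdom hY
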